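/- For every first-order theory Φ and every ground normal logic program P, ι_EB(Φ,P) ≡ᴱ ι_EH(Φ,P), i.e., Φ ∪ τ_EB(P) and Φ ∪ τ_EH(P) have exactly the same stableᴱ expansions. -/

import Mathlib

set_option autoImplicit false

/-! # First-order autoepistemic logic (FO-AEL): syntax -/

structure Sig : Type 1 where
  Func : Type
  Pred : Type
  arF : Func → ℕ
  arP : Pred → ℕ

inductive Term (S : Sig) : Type
  | var : ℕ → Term S
  | func : (f : S.Func) → (Fin (S.arF f) → Term S) → Term S

inductive Formula (S : Sig) : Type
  | atom : (p : S.Pred) → (Fin (S.arP p) → Term S) → Formula S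
  | eq : Term S → Term S → Formula S
  | not : Formula S → Formula S
  | and : Formula S → Formula S → Formula S
  | ex : ℕ → Formula S → Formula S
  | box : Formula S → Formula S

namespace Term

variable {S : Sig}

/-- A term is ground if it contains no variables; ground terms are the *names*. -/
def isGround : Term S → Prop
  | var _ => False
  | func _ ts => ∀ i, (ts i).isGround

def hasVar (x : ℕ) : Term S → Prop
  | var y => y = x
  | func _ ts => ∃ i, (ts i).hasVar x

/-- Application of a partial (name) substitution to a term. -/
def subst (β : ℕ → Option (Term S)) : Term S → Term S
  | var x => (β x).getD (var x)
  | func f ts => func f (fun i => (ts i).subst β)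

/-- The function symbols occurring in a term. -/
def funcs : Term S → Set S.Func
  | var _ => ∅
  | func f ts => insert f (⋃ i, (ts i).funcs)

/-- `t` is a name (ground term) over the set `F` of function symbols. -/
def isNameOf (F : Set S.Func) : Term S → Prop
  | var _ => False
  | func f ts => f ∈ F ∧ ∀ i, (ts i).isNameOf F

end Term

namespace Formula

variable {S : Sig}

/-- A formula is objective if it is 𝖫-free. -/
def isObjective : Formula S → Prop
  | atom _ _ => True
  | eq _ _ => True
  | not φ => φ.isObjective
  | and φ ψ => φ.isObjective ∧ ψ.isObjective
  | ex _ φ => φ.isObjective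
  | box _ => False

def isGround : Formula S → Prop
  | atom _ ts => ∀ i, (ts i).isGround
  | eq t₁ t₂ => t₁.isGround ∧ t₂.isGround
  | not φ => φ.isGround
  | and φ ψ => φ.isGround ∧ ψ.isGround
  | ex _ _ => False
  | box φ => φ.isGround

def isAtomic : Formula S → Prop
  | atom _ _ => True
  | eq _ _ => True
  | not _ => False
  | and _ _ => False
  | ex _ _ => False
  | box _ => False

/-- The modal operator 𝖫 occurs only applied to (objective) atomic formulas. -/
def boxAtomic : Formula S → Prop
  | atom _ _ => True
  | eq _ _ => True
  | not φ => φ.boxAtomic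
  | and φ ψ => φ.boxAtomic ∧ ψ.boxAtomic
  | ex _ φ => φ.boxAtomic
  | box φ => φ.isAtomic

/-- Propositional formulas: built from 0-ary predicates only. -/
def isPropositional : Formula S → Prop
  | atom p _ => S.arP p = 0
  | eq _ _ => False
  | not φ => φ.isPropositional
  | and φ ψ => φ.isPropositional ∧ ψ.isPropositional
  | ex _ _ => False
  | box _ => False

def freeIn (x : ℕ) : Formula S → Prop
  | atom _ ts => ∃ i, (ts i).hasVar x
  | eq t₁ t₂ => t₁.hasVar x ∨ t₂.hasVar x
  | not φ => φ.freeIn x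
  | and φ ψ => φ.freeIn x ∨ ψ.freeIn x
  | ex y φ => x ≠ y ∧ φ.freeIn x
  | box φ => φ.freeIn x

/-- A formula is closed (a sentence) if it has no free variables. -/
def closed (φ : Formula S) : Prop := ∀ x, ¬ φ.freeIn x

/-- Capture-avoiding application of a partial name substitution (values are ground). -/
def subst (β : ℕ → Option (Term S)) : Formula S → Formula S
  | atom p ts => atom p (fun i => (ts i).subst β)
  | eq t₁ t₂ => eq (t₁.subst β) (t₂.subst β)
  | not φ => not (φ.subst β)
  | and φ ψ => and (φ.subst β) (ψ.subst β)
  | ex y φ => ex y (φ.subst (fun z => if z = y then none else β z))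
  | box φ => box (φ.subst β)

def funcs : Formula S → Set S.Func
  | atom _ ts => ⋃ i, (ts i).funcs
  | eq t₁ t₂ => t₁.funcs ∪ t₂.funcs
  | not φ => φ.funcs
  | and φ ψ => φ.funcs ∪ ψ.funcs
  | ex _ φ => φ.funcs
  | box φ => φ.funcs

def preds : Formula S → Set S.Pred
  | atom p _ => {p}
  | eq _ _ => ∅
  | not φ => φ.preds
  | and φ ψ => φ.preds ∪ ψ.preds
  | ex _ φ => φ.preds
  | box φ => φ.preds

/-- `φ ∨ ψ` as an abbreviation: `¬(¬φ ∧ ¬ψ)`. -/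
def or (φ ψ : Formula S) : Formula S := not (and (not φ) (not ψ))

/-- `φ ⊃ ψ` as an abbreviation: `¬(φ ∧ ¬ψ)`. -/
def imp (φ ψ : Formula S) : Formula S := not (and φ (not ψ))

/-- `∀x.φ` as an abbreviation: `¬∃x.¬φ`. -/
def all (x : ℕ) (φ : Formula S) : Formula S := not (ex x (not φ))

end Formula

/-! ## Semantics -/

structure Interp (S : Sig) where
  U : Type
  nonempty : Nonempty U
  interpF : (f : S.Func) → (Fin (S.arF f) → U) → U
  interpP : (p : S.Pred) → (Fin (S.arP p) → U) → Prop

noncomputable def Interp.dflt {S : Sig} (w : Interp S) : w.U := Classical.choice w.nonempty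

def Term.eval {S : Sig} (w : Interp S) (B : ℕ → w.U) : Term S → w.U
  | Term.var x => B x
  | Term.func f ts => w.interpF f (fun i => (ts i).eval w B)

/-- Evaluation of a ground term (the assignment is irrelevant). -/
noncomputable def Term.evalG {S : Sig} (w : Interp S) (t : Term S) : w.U :=
  t.eval w (fun _ => w.dflt)

/-- An individual is named if some name (ground term) denotes it. -/
def IsNamed {S : Sig} (w : Interp S) (k : w.U) : Prop :=
  ∃ t : Term S, t.isGround ∧ Term.evalG w t = k

/-- A name substitution `β` is associated with the variable assignment `B`:
its domain is exactly the set of variables whose `B`-value is named, and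
it assigns to each such variable a name denoting its `B`-value. -/
def Assoc {S : Sig} (w : Interp S) (B : ℕ → w.U) (β : ℕ → Option (Term S)) : Prop :=
  ∀ x : ℕ,
    (IsNamed w (B x) → (β x).isSome) ∧
    (∀ t : Term S, β x = some t → t.isGround ∧ Term.evalG w t = B x)

/-- The two semantics: any-name (E) and all-name (A). -/
inductive Sem : Type
  | any
  | all

/-- Satisfaction of a formula in an autoepistemic interpretation `⟨w,Γ⟩`
under a variable assignment, for the any-name (E) resp. all-name (A) semantics. -/
def Sat {S : Sig} (X : Sem) (w : Interp S) (Γ : Set (Formula S)) :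
    Formula S → (ℕ → w.U) → Prop
  | Formula.atom p ts, B => w.interpP p (fun i => (ts i).eval w B)
  | Formula.eq t₁ t₂, B => t₁.eval w B = t₂.eval w B
  | Formula.not φ, B => ¬ Sat X w Γ φ B
  | Formula.and φ ψ, B => Sat X w Γ φ B ∧ Sat X w Γ ψ B
  | Formula.ex x φ, B => ∃ u : w.U, Sat X w Γ φ (Function.update B x u)
  | Formula.box φ, B =>
      match X with
      | Sem.any => ∃ β, Assoc w B β ∧ (φ.subst β).closed ∧ φ.subst β ∈ Γ
      | Sem.all => ∀ β, Assoc w B β → (φ.subst β).closed ∧ φ.subst β ∈ Γ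

def ModelsF {S : Sig} (X : Sem) (w : Interp S) (Γ : Set (Formula S)) (φ : Formula S) : Prop :=
  ∀ B : ℕ → w.U, Sat X w Γ φ B

def ModelsT {S : Sig} (X : Sem) (w : Interp S) (Γ Φ : Set (Formula S)) : Prop :=
  ∀ φ ∈ Φ, ModelsF X w Γ φ

/-- `Φ ⊨ˣ_Γ φ`. -/
def Entails {S : Sig} (X : Sem) (Φ Γ : Set (Formula S)) (φ : Formula S) : Prop :=
  ∀ w : Interp S, ModelsT X w Γ Φ → ModelsF X w Γ φ

/-- The standard names assumption: all names are interpreted distinctly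
and every individual is named. -/
def SNA {S : Sig} (w : Interp S) : Prop :=
  (∀ t₁ t₂ : Term S, t₁.isGround → t₂.isGround → Term.evalG w t₁ = Term.evalG w t₂ → t₁ = t₂) ∧
  (∀ k : w.U, IsNamed w k)

/-- Entailment restricted to interpretations satisfying the standard names assumption. -/
def EntailsSN {S : Sig} (X : Sem) (Φ Γ : Set (Formula S)) (φ : Formula S) : Prop :=
  ∀ w : Interp S, SNA w → ModelsT X w Γ Φ → ModelsF X w Γ φ

/-- `T` is a stableˣ expansion of `Φ`. -/
def StableExp {S : Sig} (X : Sem) (Φ T : Set (Formula S)) : Prop :=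
  T = {φ | Entails X Φ T φ}

def objOf {S : Sig} (T : Set (Formula S)) : Set (Formula S) :=
  {φ ∈ T | φ.isObjective}

def ogOf {S : Sig} (T : Set (Formula S)) : Set (Formula S) :=
  {φ ∈ T | φ.isObjective ∧ φ.isGround}

def ogaOf {S : Sig} (T : Set (Formula S)) : Set (Formula S) :=
  {φ ∈ T | φ.isObjective ∧ φ.isGround ∧ φ.isAtomic}

def Consistent {S : Sig} (T : Set (Formula S)) : Prop := T ≠ Set.univ

/-- `Φ₁ ≡ˣ Φ₂`: same stableˣ expansions. -/
def ExpEquiv {S : Sig} (X : Sem) (Φ₁ Φ₂ : Set (Formula S)) : Prop :=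
  ∀ T, StableExp X Φ₁ T ↔ StableExp X Φ₂ T

/-- `Φ₁ ≡ˣ_γ Φ₂` for a selector `sel` (e.g. `ogaOf`): the stableˣ expansions
correspond with respect to `sel`. -/
def ExpEquivSel {S : Sig} (X : Sem) (sel : Set (Formula S) → Set (Formula S))
    (Φ₁ Φ₂ : Set (Formula S)) : Prop :=
  (∀ T, StableExp X Φ₁ T → ∃ T', StableExp X Φ₂ T' ∧ sel T = sel T') ∧
  (∀ T', StableExp X Φ₂ T' → ∃ T, StableExp X Φ₁ T ∧ sel T = sel T')

/-- Autoepistemicˣ consequences of `Φ`. -/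
def Cn {S : Sig} (X : Sem) (Φ : Set (Formula S)) : Set (Formula S) :=
  {φ | ∀ T, StableExp X Φ T → φ ∈ T}

def CnO {S : Sig} (X : Sem) (Φ : Set (Formula S)) : Set (Formula S) :=
  {φ ∈ Cn X Φ | φ.isObjective}

def CnOg {S : Sig} (X : Sem) (Φ : Set (Formula S)) : Set (Formula S) :=
  {φ ∈ Cn X Φ | φ.isObjective ∧ φ.isGround}

/-! ## Logic programs -/

structure PAtom (S : Sig) where
  p : S.Pred
  args : Fin (S.arP p) → Term S

namespace PAtom

variable {S : Sig}

def toFormula (a : PAtom S) : Formula S := Formula.atom a.p a.args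

def isGround (a : PAtom S) : Prop := ∀ i, (a.args i).isGround

def hasVar (x : ℕ) (a : PAtom S) : Prop := ∃ i, (a.args i).hasVar x

def substA (σ : ℕ → Term S) (a : PAtom S) : PAtom S :=
  ⟨a.p, fun i => (a.args i).subst (fun x => some (σ x))⟩

def funcs (a : PAtom S) : Set S.Func := ⋃ i, (a.args i).funcs

end PAtom

/-- A (disjunctive) rule `h₁ | … | h_l ← b₁,…,b_m, not c₁,…,not c_n`,
together with a list of the variables occurring in it. -/
structure Rule (S : Sig) where
  head : List (PAtom S)
  pos : List (PAtom S)
  neg : List (PAtom S)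
  vars : List ℕ

namespace Rule

variable {S : Sig}

def atoms (r : Rule S) : List (PAtom S) := r.head ++ r.pos ++ r.neg

def hasVar (x : ℕ) (r : Rule S) : Prop := ∃ a ∈ r.atoms, PAtom.hasVar x a

/-- Well-formedness: at least one head atom, and `vars` lists all variables of the rule. -/
def wf (r : Rule S) : Prop := r.head ≠ [] ∧ ∀ x, r.hasVar x → x ∈ r.vars

def isNormal (r : Rule S) : Prop := r.head.length = 1

def isGround (r : Rule S) : Prop := (∀ a ∈ r.atoms, a.isGround) ∧ r.vars = []

def isSafe (r : Rule S) : Prop := ∀ x, r.hasVar x → ∃ a ∈ r.pos, PAtom.hasVar x a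

def isPositive (r : Rule S) : Prop := r.neg = []

def applySubst (σ : ℕ → Term S) (r : Rule S) : Rule S :=
  ⟨r.head.map (PAtom.substA σ), r.pos.map (PAtom.substA σ), r.neg.map (PAtom.substA σ), []⟩

end Rule

abbrev Program (S : Sig) := Set (Rule S)

def progWf {S : Sig} (P : Program S) : Prop := ∀ r ∈ P, r.wf
def progNormal {S : Sig} (P : Program S) : Prop := ∀ r ∈ P, r.isNormal
def progGround {S : Sig} (P : Program S) : Prop := ∀ r ∈ P, r.isGround
def progSafe {S : Sig} (P : Program S) : Prop := ∀ r ∈ P, r.isSafe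
def progPositive {S : Sig} (P : Program S) : Prop := ∀ r ∈ P, r.isPositive

/-- The function symbols occurring in `P` (part of the signature `Σ_P`). -/
def progFuncs {S : Sig} (P : Program S) : Set S.Func :=
  {f | ∃ r ∈ P, ∃ a ∈ r.atoms, f ∈ a.funcs}

/-- The predicate symbols occurring in `P` (part of the signature `Σ_P`). -/
def progPreds {S : Sig} (P : Program S) : Set S.Pred :=
  {q | ∃ r ∈ P, ∃ a ∈ r.atoms, a.p = q}

/-- The ambient signature is exactly the signature `Σ_P` of `P`. -/
def fullSig {S : Sig} (P : Program S) : Prop :=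
  (∀ f : S.Func, f ∈ progFuncs P) ∧ (∀ q : S.Pred, q ∈ progPreds P)

/-- Standing assumption: `Σ_P` contains a 0-ary function symbol whenever it
has a predicate symbol of arity greater than 0. -/
def goodSig {S : Sig} (P : Program S) : Prop :=
  (∃ q ∈ progPreds P, 0 < S.arP q) → ∃ f ∈ progFuncs P, S.arF f = 0

/-! ## Embeddings of logic programs into FO-AEL -/

def andAll {S : Sig} : Formula S → List (Formula S) → Formula S
  | φ, [] => φ
  | φ, ψ :: rest => andAll (Formula.and φ ψ) rest

def orAll {S : Sig} : Formula S → List (Formula S) → Formula S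
  | φ, [] => φ
  | φ, ψ :: rest => orAll (Formula.or φ ψ) rest

/-- `impOf ants c` is `⋀ ants ⊃ c` (just `c` if there are no antecedents). -/
def impOf {S : Sig} : List (Formula S) → Formula S → Formula S
  | [], c => c
  | a :: rest, c => Formula.imp (andAll a rest) c

/-- Disjunction of a nonempty list (junk value on the empty list,
which is excluded by rule well-formedness). -/
def disjOf {S : Sig} : List (Formula S) → Formula S
  | [] => Formula.eq (Term.var 0) (Term.var 0)
  | h :: rest => orAll h rest

/-- Universal uclosure over the listed variables. -/
def uclosure {S : Sig} (vs : List ℕ) (φ : Formula S) : Formula S :=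
  vs.foldr Formula.all φ

def bodyHP {S : Sig} (r : Rule S) : List (Formula S) :=
  r.pos.map PAtom.toFormula ++ r.neg.map (fun c => Formula.not (Formula.box c.toFormula))

def bodyE {S : Sig} (r : Rule S) : List (Formula S) :=
  r.pos.map (fun b => Formula.and b.toFormula (Formula.box b.toFormula)) ++
    r.neg.map (fun c => Formula.not (Formula.box c.toFormula))

/-- `τ_HP(r)` resp. `τ^∨_HP(r)`. -/
def embHP {S : Sig} (r : Rule S) : Formula S :=
  uclosure r.vars (impOf (bodyHP r) (disjOf (r.head.map PAtom.toFormula)))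

/-- `τ_EB(r)` resp. `τ^∨_EB(r)`. -/
def embEB {S : Sig} (r : Rule S) : Formula S :=
  uclosure r.vars (impOf (bodyE r) (disjOf (r.head.map PAtom.toFormula)))

/-- `τ_EH(r)` resp. `τ^∨_EH(r)`. -/
def embEH {S : Sig} (r : Rule S) : Formula S :=
  uclosure r.vars (impOf (bodyE r)
    (disjOf (r.head.map (fun h => Formula.and h.toFormula (Formula.box h.toFormula)))))

/-- The unique-names axioms `¬𝖫(t₁=t₂) ⊃ t₁≠t₂` for distinct names of `Σ_P`. -/
def UNAax {S : Sig} (P : Program S) : Set (Formula S) :=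
  {φ | ∃ t₁ t₂ : Term S, t₁.isNameOf (progFuncs P) ∧ t₂.isNameOf (progFuncs P) ∧ t₁ ≠ t₂ ∧
        φ = Formula.imp (Formula.not (Formula.box (Formula.eq t₁ t₂)))
              (Formula.not (Formula.eq t₁ t₂))}

/-- The positive introspection axioms `α ⊃ 𝖫α` for objective ground atoms of `Σ_P`. -/
def PIAax {S : Sig} (P : Program S) : Set (Formula S) :=
  {φ | ∃ a : PAtom S, a.p ∈ progPreds P ∧ (∀ i, (a.args i).isNameOf (progFuncs P)) ∧
        φ = Formula.imp a.toFormula (Formula.box a.toFormula)}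

def ruleEmb {S : Sig} (emb : Rule S → Formula S) (P : Program S) : Set (Formula S) :=
  {φ | ∃ r ∈ P, φ = emb r}

def tauHP {S : Sig} (P : Program S) : Set (Formula S) := ruleEmb embHP P ∪ UNAax P
def tauEB {S : Sig} (P : Program S) : Set (Formula S) := ruleEmb embEB P ∪ UNAax P
def tauEH {S : Sig} (P : Program S) : Set (Formula S) := ruleEmb embEH P ∪ UNAax P
def tauHPv {S : Sig} (P : Program S) : Set (Formula S) := ruleEmb embHP P ∪ PIAax P ∪ UNAax P
def tauEBv {S : Sig} (P : Program S) : Set (Formula S) := ruleEmb embEB P ∪ PIAax P ∪ UNAax P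
def tauEHv {S : Sig} (P : Program S) : Set (Formula S) := ruleEmb embEH P ∪ UNAax P
def tauHPminus {S : Sig} (P : Program S) : Set (Formula S) := ruleEmb embHP P
def tauEHvminus {S : Sig} (P : Program S) : Set (Formula S) := ruleEmb embEH P

/-! ## Grounding and stable models -/

/-- The grounding of `P`: all ground instantiations of rules of `P`
obtained by replacing variables with names of `Σ_P`. -/
def grP {S : Sig} (P : Program S) : Program S :=
  {r' | ∃ r ∈ P, ∃ σ : ℕ → Term S,
        (∀ x, r.hasVar x → (σ x).isNameOf (progFuncs P)) ∧ r' = Rule.applySubst σ r}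

/-- A Herbrand interpretation: a set of ground atomic formulas. -/
def HerbrandI {S : Sig} (M : Set (Formula S)) : Prop :=
  ∀ φ ∈ M, φ.isAtomic ∧ φ.isGround

/-- `M` is a Herbrand model of the positive ground program `Q` (relative to the
names of `Σ_P`): rules are satisfied and `t = t ∈ M` for every name `t`. -/
def HerbrandModelOf {S : Sig} (P Q : Program S) (M : Set (Formula S)) : Prop :=
  HerbrandI M ∧
  (∀ r ∈ Q, (∀ b ∈ r.pos, PAtom.toFormula b ∈ M) → ∃ h ∈ r.head, PAtom.toFormula h ∈ M) ∧
  (∀ t : Term S, t.isNameOf (progFuncs P) → Formula.eq t t ∈ M)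

/-- The Gelfond–Lifschitz reduct of `gr(P)` with respect to `M`. -/
def reduct {S : Sig} (P : Program S) (M : Set (Formula S)) : Program S :=
  {r' | ∃ r ∈ grP P, (∀ c ∈ r.neg, PAtom.toFormula c ∉ M) ∧
        r' = ⟨r.head, r.pos, [], r.vars⟩}

/-- `M` is a stable model of `P`: a minimal Herbrand model of the reduct of `gr(P)` w.r.t. `M`. -/
def isStableModel {S : Sig} (P : Program S) (M : Set (Formula S)) : Prop :=
  HerbrandModelOf P (reduct P M) M ∧
  ∀ M', M' ⊆ M → HerbrandModelOf P (reduct P M) M' → M' = M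

/-! ## First-order theories and classes thereof -/

/-- An FO theory: a set of objective sentences. -/
def FOTheory {S : Sig} (Φ : Set (Formula S)) : Prop :=
  ∀ φ ∈ Φ, φ.isObjective ∧ φ.closed

def theoryFuncs {S : Sig} (Φ : Set (Formula S)) : Set S.Func := {f | ∃ φ ∈ Φ, f ∈ φ.funcs}
def theoryPreds {S : Sig} (Φ : Set (Formula S)) : Set S.Pred := {q | ∃ φ ∈ Φ, q ∈ φ.preds}

/-- The ambient signature is exactly the union of the signatures of `Φ` and `P`. -/
def CoverSig {S : Sig} (Φ : Set (Formula S)) (P : Program S) : Prop :=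
  (∀ f : S.Func, f ∈ theoryFuncs Φ ∪ progFuncs P) ∧
  (∀ q : S.Pred, q ∈ theoryPreds Φ ∪ progPreds P)

def exClosure {S : Sig} (ys : List ℕ) (φ : Formula S) : Formula S := ys.foldr Formula.ex φ

/-- A Horn sentence `(∀)(b₁ ∧ … ∧ b_n ⊃ h)` with atomic `b_i`, `h`
(the consequent `h` may be absent). -/
def isHornSentence {S : Sig} (φ : Formula S) : Prop :=
  ∃ (vs : List ℕ) (bs : List (Formula S)),
    (∀ b ∈ bs, b.isAtomic) ∧
    ((∃ h : Formula S, h.isAtomic ∧ φ = uclosure vs (impOf bs h)) ∨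
     (∃ b rest, bs = b :: rest ∧ φ = uclosure vs (Formula.not (andAll b rest))))

def HornTheory {S : Sig} (Φ : Set (Formula S)) : Prop :=
  FOTheory Φ ∧ ∀ φ ∈ Φ, isHornSentence φ

/-- A generalized Horn sentence `(∀)(b₁ ∧ … ∧ b_n ⊃ ∃ȳ.h)` with atomic `b_i`, `h`,
the variables `ȳ` occurring only in `h` (the consequent may be absent). -/
def isGHornSentence {S : Sig} (φ : Formula S) : Prop :=
  ∃ (vs : List ℕ) (bs : List (Formula S)),
    (∀ b ∈ bs, b.isAtomic) ∧
    ((∃ (ys : List ℕ) (h : Formula S), h.isAtomic ∧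
        (∀ y ∈ ys, ∀ b ∈ bs, ¬ b.freeIn y) ∧
        φ = uclosure vs (impOf bs (exClosure ys h))) ∨
     (∃ b rest, bs = b :: rest ∧ φ = uclosure vs (Formula.not (andAll b rest))))

def GHornTheory {S : Sig} (Φ : Set (Formula S)) : Prop :=
  FOTheory Φ ∧ ∀ φ ∈ Φ, isGHornSentence φ

def PropTheory {S : Sig} (Φ : Set (Formula S)) : Prop :=
  FOTheory Φ ∧ ∀ φ ∈ Φ, φ.isPropositional

theorem Term.subst_ground {S : Sig} (β : ℕ → Option (Term S)) (t : Term S) (h : t.isGround) :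
    t.subst β = t := by
  induction t with
  | var x => exact h.elim
  | func f ts ih =>
    simp only [Term.subst]
    congr 1
    funext i
    exact ih i (h i)

theorem Term.not_hasVar_ground {S : Sig} (x : ℕ) (t : Term S) (h : t.isGround) :
    ¬ t.hasVar x := by
  induction t with
  | var y => exact h.elim
  | func f ts ih =>
    rintro ⟨i, hi⟩
    exact ih i (h i) hi

theorem exists_assoc {S : Sig} (w : Interp S) (B : ℕ → w.U) : ∃ β, Assoc w B β := by
  classical
  refine ⟨fun x => if h : IsNamed w (B x) then some h.choose else none, fun x => ⟨?_, ?_⟩⟩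
  · intro h
    simp [h]
  · intro t ht
    by_cases h : IsNamed w (B x)
    · simp only [h, dite_true, Option.some.injEq] at ht
      subst ht
      exact h.choose_spec
    · simp [h] at ht

theorem sat_box {S : Sig} (w : Interp S) (T : Set (Formula S)) (B : ℕ → w.U) (a : PAtom S)
    (h : a.isGround) : Sat Sem.any w T (Formula.box a.toFormula) B ↔ a.toFormula ∈ T := by
  have hs : ∀ β, a.toFormula.subst β = a.toFormula := by
    intro β
    simp only [PAtom.toFormula, Formula.subst]
    congr 1
    funext i
    exact Term.subst_ground β _ (h i)
  have hc : a.toFormula.closed := by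
    rintro x ⟨i, hi⟩
    exact Term.not_hasVar_ground x _ (h i) hi
  obtain ⟨β, hβ⟩ := exists_assoc w B
  simp only [Sat, hs]
  exact ⟨fun ⟨_, _, _, h⟩ => h, fun h => ⟨β, hβ, hc, h⟩⟩

theorem sat_andAll {S : Sig} (w : Interp S) (T : Set (Formula S)) (B : ℕ → w.U)
    (l : List (Formula S)) : ∀ a, Sat Sem.any w T (andAll a l) B ↔
      (Sat Sem.any w T a B ∧ ∀ x ∈ l, Sat Sem.any w T x B) := by
  induction l with
  | nil => intro a; simp [andAll]
  | cons b l ih => intro a; simp [andAll, ih, Sat, and_assoc]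

theorem sat_impOf {S : Sig} (w : Interp S) (T : Set (Formula S)) (B : ℕ → w.U)
    (l : List (Formula S)) (c : Formula S) : Sat Sem.any w T (impOf l c) B ↔
      ((∀ x ∈ l, Sat Sem.any w T x B) → Sat Sem.any w T c B) := by
  cases l with
  | nil => simp [impOf]
  | cons b l => simp [impOf, Formula.imp, Sat, sat_andAll]

theorem sat_bodyE {S : Sig} (w : Interp S) (T : Set (Formula S)) (B : ℕ → w.U) (r : Rule S)
    (h : r.isGround) : (∀ x ∈ bodyE r, Sat Sem.any w T x B) ↔
      ((∀ b ∈ r.pos, Sat Sem.any w T b.toFormula B ∧ b.toFormula ∈ T) ∧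
        ∀ c ∈ r.neg, c.toFormula ∉ T) := by
  have hp : ∀ b ∈ r.pos, (Sat Sem.any w T (Formula.box b.toFormula) B ↔ b.toFormula ∈ T) :=
    fun b hb => sat_box w T B b (h.1 b (by simp [Rule.atoms, hb]))
  have hn : ∀ b ∈ r.neg, (Sat Sem.any w T (Formula.box b.toFormula) B ↔ b.toFormula ∈ T) :=
    fun b hb => sat_box w T B b (h.1 b (by simp [Rule.atoms, hb]))
  have e1 : ∀ φ ψ : Formula S, Sat Sem.any w T (Formula.and φ ψ) B ↔
      (Sat Sem.any w T φ B ∧ Sat Sem.any w T ψ B) := fun _ _ => Iff.rfl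
  have e2 : ∀ φ : Formula S, Sat Sem.any w T (Formula.not φ) B ↔
      ¬ Sat Sem.any w T φ B := fun _ => Iff.rfl
  constructor
  · intro H
    refine ⟨fun b hb => ?_, fun c hc => ?_⟩
    · rw [← hp b hb, ← e1]
      exact H _ (List.mem_append_left _ (List.mem_map_of_mem hb))
    · rw [← hn c hc, ← e2]
      exact H _ (List.mem_append_right _
        (List.mem_map_of_mem (f := fun c => Formula.not (Formula.box c.toFormula)) hc))
  · rintro ⟨H1, H2⟩ x hx
    rcases List.mem_append.1 hx with hx | hx
    · obtain ⟨b, hb, rfl⟩ := List.mem_map.1 hx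
      rw [e1, hp b hb]
      exact H1 b hb
    · obtain ⟨b, hb, rfl⟩ := List.mem_map.1 hx
      rw [e2, hn b hb]
      exact H2 b hb

/-- semantic condition shared by both embeddings -/
theorem sat_embEB {S : Sig} (w : Interp S) (T : Set (Formula S)) (B : ℕ → w.U) (r : Rule S)
    (h : r.isGround) (a : PAtom S) (ha : r.head = [a]) :
    Sat Sem.any w T (embEB r) B ↔
      (((∀ b ∈ r.pos, Sat Sem.any w T b.toFormula B ∧ b.toFormula ∈ T) ∧
        ∀ c ∈ r.neg, c.toFormula ∉ T) → Sat Sem.any w T a.toFormula B) := by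
  rw [← sat_bodyE w T B r h, ← sat_impOf]
  simp [embEB, h.2, uclosure, ha, disjOf, orAll]

theorem sat_embEH {S : Sig} (w : Interp S) (T : Set (Formula S)) (B : ℕ → w.U) (r : Rule S)
    (h : r.isGround) (a : PAtom S) (ha : r.head = [a]) :
    Sat Sem.any w T (embEH r) B ↔
      (((∀ b ∈ r.pos, Sat Sem.any w T b.toFormula B ∧ b.toFormula ∈ T) ∧
        ∀ c ∈ r.neg, c.toFormula ∉ T) →
          Sat Sem.any w T a.toFormula B ∧ a.toFormula ∈ T) := by
  rw [← sat_bodyE w T B r h,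
    ← sat_box w T B a (h.1 a (by simp [Rule.atoms, ha]))]
  have := sat_impOf w T B (bodyE r) (Formula.and a.toFormula (Formula.box a.toFormula))
  refine Iff.trans ?_ this
  simp [embEH, h.2, uclosure, ha, disjOf, orAll]

theorem models_split {S : Sig} (w : Interp S) (T Φ : Set (Formula S)) (P : Program S)
    (emb : Rule S → Formula S) :
    ModelsT Sem.any w T (Φ ∪ (ruleEmb emb P ∪ UNAax P)) ↔
      (ModelsT Sem.any w T Φ ∧ (∀ r ∈ P, ∀ B, Sat Sem.any w T (emb r) B) ∧
        ModelsT Sem.any w T (UNAax P)) := by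
  constructor
  · intro H
    exact ⟨fun φ h => H φ (Or.inl h), fun r hr => H _ (Or.inr (Or.inl ⟨r, hr, rfl⟩)),
      fun φ h => H φ (Or.inr (Or.inr h))⟩
  · rintro ⟨h1, h2, h3⟩ φ (h | ⟨r, hr, rfl⟩ | h)
    · exact h1 φ h
    · exact h2 r hr
    · exact h3 φ h

theorem EH_to_EB {S : Sig} (w : Interp S) (T Φ : Set (Formula S)) (P : Program S)
    (hnormal : progNormal P) (hground : progGround P)
    (H : ModelsT Sem.any w T (Φ ∪ tauEH P)) : ModelsT Sem.any w T (Φ ∪ tauEB P) := by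
  rw [tauEH, models_split] at H
  rw [tauEB, models_split]
  refine ⟨H.1, fun r hr B => ?_, H.2.2⟩
  obtain ⟨a, ha⟩ := List.length_eq_one_iff.1 (hnormal r hr)
  rw [sat_embEB w T B r (hground r hr) a ha]
  intro hb
  exact ((sat_embEH w T B r (hground r hr) a ha).1 (H.2.1 r hr B) hb).1

theorem EB_to_EH {S : Sig} (w : Interp S) (T Φ Ψ : Set (Formula S)) (P : Program S)
    (hnormal : progNormal P) (hground : progGround P) (hT : StableExp Sem.any Ψ T)
    (hΨ : ∀ w, ModelsT Sem.any w T Ψ → ModelsT Sem.any w T (Φ ∪ tauEB P))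
    (H : ModelsT Sem.any w T (Φ ∪ tauEB P)) : ModelsT Sem.any w T (Φ ∪ tauEH P) := by
  rw [tauEB, models_split] at H
  rw [tauEH, models_split]
  refine ⟨H.1, fun r hr B => ?_, H.2.2⟩
  obtain ⟨a, ha⟩ := List.length_eq_one_iff.1 (hnormal r hr)
  rw [sat_embEH w T B r (hground r hr) a ha]
  intro hb
  refine ⟨(sat_embEB w T B r (hground r hr) a ha).1 (H.2.1 r hr B) hb, ?_⟩
  have hmem : ∀ φ, φ ∈ T ↔ Entails Sem.any Ψ T φ := fun φ => Set.ext_iff.1 hT φ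
  rw [hmem]
  intro v hv C
  have hv' := hΨ v hv
  rw [tauEB, models_split] at hv'
  exact (sat_embEB v T C r (hground r hr) a ha).1 (hv'.2.1 r hr C)
    ⟨fun b hb' => ⟨(hmem _).1 (hb.1 b hb').2 v hv C, (hb.1 b hb').2⟩, hb.2⟩

/-- For every FO theory `Φ` and ground normal program `P`,
`Φ ∪ τ_EB(P)` and `Φ ∪ τ_EH(P)` have exactly the same stableᴱ expansions. -/
theorem stmt15 {S : Sig} (Φ : Set (Formula S)) (P : Program S)
    (hΦ : FOTheory Φ) (hwf : progWf P) (hnormal : progNormal P) (hground : progGround P)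
    (hgood : goodSig P) (hcov : CoverSig Φ P) :
    ExpEquiv Sem.any (Φ ∪ tauEB P) (Φ ∪ tauEH P) := by
  intro T
  have key : ∀ Ψ₁ Ψ₂ : Set (Formula S),
      (∀ w, ModelsT Sem.any w T Ψ₁ ↔ ModelsT Sem.any w T Ψ₂) →
      StableExp Sem.any Ψ₁ T → StableExp Sem.any Ψ₂ T := by
    intro Ψ₁ Ψ₂ h h1
    unfold StableExp Entails at *
    simpa only [h] using h1
  constructor
  · intro h
    exact key _ _ (fun w => ⟨EB_to_EH w T Φ _ P hnormal hground h (fun _ h => h),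
      EH_to_EB w T Φ P hnormal hground⟩) h
  · intro h
    exact key _ _ (fun w => ⟨EH_to_EB w T Φ P hnormal hground,
      EB_to_EH w T Φ _ P hnormal hground h
        (fun v hv => EH_to_EB v T Φ P hnormal hground hv)⟩) h
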